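/- Let $u$ be a real-valued harmonic function on the unit disk $D = \{(x,y) : x^2 + y^2 < 1\}$ satisfying $\int_D |u(x,y)|^2 \, dx\,dy < \infty$. Then for every point of $D$ written in polar coordinates as $(r, \theta)$ with $0 \le r < 1$: $u(r,\theta) = -u(0) + \frac{2}{\pi} \int_0^1 \int_0^{2\pi} u(\rho, \phi) \, \frac{1 - 2r\rho\cos(\theta - \phi) + r^2\rho^2 \cos 2(\theta - \phi)}{\left(1 - 2r\rho\cos(\theta - \phi) + r^2\rho^2\right)^2} \, d\phi \, \rho \, d\rho$, where $u(0)$ is the value of $u$ at the origin. -/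

import Mathlib

/-!
Let `z = r e^{iθ}` and let `ζ = ρ e^{iφ}` run over the circle of radius `ρ < 1`. The kernel is the
real part of `K(z, ζ) = (1 - z ζ̄)⁻²`. On the circle `ζ̄ = ρ² / ζ`, so
`K(z, ζ) = (ζ / (ζ - a))²` with `a = ρ² z`, and for holomorphic `f` Cauchy's formula for the
derivative of `ζ f(ζ)` evaluates the circle average of `K(z, ·) f` as `f(a) + a f'(a)`. The
conjugate `(1 - ζ z̄)⁻²` is holomorphic in `ζ`, so the mean value property evaluates the circle
average of its product with `f` as `f(0)`. Adding the two and taking real parts, the circle average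
of `u` against the kernel is `(u(a) + Du(a) a + u(0)) / 2` for harmonic `u`.

With `t = ρ²`, the remaining radial integrand `u(tz) + Du(tz)(tz) + u(0)` is the derivative of
`t (u(tz) + u(0))`.
-/

open MeasureTheory Real

/-- The Laplacian of a function `u : ℂ → ℝ`, computed as the sum of the two pure
second directional derivatives in the coordinate directions `1` and `I`:
`Δu = ∂²u/∂x² + ∂²u/∂y²`. -/
noncomputable def laplacian (u : ℂ → ℝ) (z : ℂ) : ℝ :=
  iteratedFDeriv ℝ 2 u z ![1, 1] + iteratedFDeriv ℝ 2 u z ![Complex.I, Complex.I]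

open Metric Set
open InnerProductSpace (HarmonicOnNhd)
open scoped ComplexConjugate

lemma harmonicOnNhd_of_laplacian_eq_zero {u : ℂ → ℝ} {s : Set ℂ} (hs : IsOpen s)
    (hu : ContDiffOn ℝ 2 u s) (hΔ : ∀ z ∈ s, laplacian u z = 0) : HarmonicOnNhd u s := by
  refine fun z hz ↦ ⟨hu.contDiffAt (hs.mem_nhds hz), ?_⟩
  rw [InnerProductSpace.laplacian_eq_iteratedFDeriv_complexPlane]
  exact Filter.eventually_of_mem (hs.mem_nhds hz) hΔ

/-- The Bergman kernel of the unit disk, as the reproducing kernel of the holomorphic Bergman space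
for the area measure of total mass one: it lacks the factor `1 / π` of the kernel for Lebesgue
measure. Its real part is the kernel of the representation formula. -/
noncomputable def bergmanKernel (z ζ : ℂ) : ℂ := ((1 - z * conj ζ) ^ 2)⁻¹

section BergmanKernel

variable {z ζ : ℂ} {R : ℝ}

lemma conj_bergmanKernel (z ζ : ℂ) : conj (bergmanKernel z ζ) = bergmanKernel ζ z := by
  simp [bergmanKernel, mul_comm]

lemma re_inv_one_sub_sq (w : ℂ) :
    (((1 - w) ^ 2)⁻¹).re =
      (1 - 2 * w.re + (w ^ 2).re) / (1 - 2 * w.re + Complex.normSq w) ^ 2 := by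
  have hre : ((1 - w) ^ 2).re = 1 - 2 * w.re + (w ^ 2).re := by
    simp only [sq, Complex.mul_re, Complex.sub_re, Complex.sub_im, Complex.one_re, Complex.one_im]
    ring
  have hnormSq : Complex.normSq (1 - w) = 1 - 2 * w.re + Complex.normSq w := by
    simp only [Complex.normSq_apply, Complex.sub_re, Complex.sub_im, Complex.one_re, Complex.one_im]
    ring
  rw [Complex.inv_re, map_pow, hre, hnormSq]

lemma re_bergmanKernel_circleMap (r θ ρ φ : ℝ) :
    (bergmanKernel (circleMap 0 r θ) (circleMap 0 ρ φ)).re =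
      (1 - 2 * r * ρ * cos (θ - φ) + r ^ 2 * ρ ^ 2 * cos (2 * (θ - φ))) /
        (1 - 2 * r * ρ * cos (θ - φ) + r ^ 2 * ρ ^ 2) ^ 2 := by
  have hmul : circleMap 0 r θ * conj (circleMap 0 ρ φ) = circleMap 0 (r * ρ) (θ - φ) := by
    simp only [circleMap_zero, map_mul, ← Complex.exp_conj, Complex.conj_ofReal, Complex.conj_I]
    rw [mul_mul_mul_comm, ← Complex.exp_add]
    push_cast
    ring_nf
  have hsq : circleMap 0 (r * ρ) (θ - φ) ^ 2 = circleMap 0 ((r * ρ) ^ 2) (2 * (θ - φ)) := by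
    simp only [circleMap_zero, mul_pow, ← Complex.exp_nat_mul]
    push_cast
    ring_nf
  have hnormSq : Complex.normSq (circleMap 0 (r * ρ) (θ - φ)) = (r * ρ) ^ 2 := by
    rw [Complex.normSq_eq_norm_sq, norm_circleMap_zero, sq_abs]
  have hre (s ψ : ℝ) : (circleMap 0 s ψ).re = s * cos ψ := by
    rw [circleMap_zero, Complex.re_ofReal_mul, Complex.exp_ofReal_mul_I_re]
  rw [bergmanKernel, hmul, re_inv_one_sub_sq, hsq, hnormSq, hre, hre]
  ring_nf

lemma one_sub_mul_conj_ne_zero (h : ‖z‖ * ‖ζ‖ < 1) : 1 - z * conj ζ ≠ 0 := by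
  intro h0
  have : ‖z * conj ζ‖ = 1 := by rw [← sub_eq_zero.1 h0, norm_one]
  rw [norm_mul, RCLike.norm_conj] at this
  exact h.ne this

lemma continuousOn_bergmanKernel (h : ‖z‖ * R < 1) :
    ContinuousOn (bergmanKernel z) (closedBall 0 R) := by
  unfold bergmanKernel
  refine ContinuousOn.inv₀ (by fun_prop) fun ζ hζ ↦ pow_ne_zero 2 (one_sub_mul_conj_ne_zero ?_)
  exact (mul_le_mul_of_nonneg_left (mem_closedBall_zero_iff.1 hζ) (norm_nonneg z)).trans_lt h

lemma differentiableOn_conj_bergmanKernel (h : ‖z‖ * R < 1) :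
    DifferentiableOn ℂ (fun ζ ↦ conj (bergmanKernel z ζ)) (closedBall 0 R) := by
  simp only [conj_bergmanKernel]
  unfold bergmanKernel
  refine DifferentiableOn.inv (by fun_prop) fun ζ hζ ↦ pow_ne_zero 2 (one_sub_mul_conj_ne_zero ?_)
  rw [mul_comm]
  exact (mul_le_mul_of_nonneg_left (mem_closedBall_zero_iff.1 hζ) (norm_nonneg z)).trans_lt h

lemma bergmanKernel_eq_of_mem_sphere (hR : R ≠ 0) (hζ : ζ ∈ sphere (0 : ℂ) R) :
    bergmanKernel z ζ = (ζ / (ζ - R ^ 2 * z)) ^ 2 := by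
  have hζR : ζ * conj ζ = R ^ 2 := by
    rw [Complex.mul_conj', mem_sphere_zero_iff_norm.1 hζ]
  have hζ0 : ζ ≠ 0 := by
    rintro rfl
    simp_all
  have hsub : ζ - R ^ 2 * z = ζ * (1 - z * conj ζ) := by rw [← hζR]; ring
  rw [bergmanKernel, hsub, div_mul_cancel_left₀ hζ0, inv_pow]

end BergmanKernel

section Holomorphic

variable {E : Type*} [NormedAddCommGroup E] [NormedSpace ℂ E] [CompleteSpace E]
variable {f : ℂ → E} {U : Set ℂ} {z : ℂ} {R : ℝ}

lemma circleAverage_bergmanKernel_smul (hU : IsOpen U) (hRU : closedBall 0 R ⊆ U)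
    (hf : DifferentiableOn ℂ f U) (hR : 0 < R) (hz : ‖z‖ * R < 1) :
    circleAverage (fun ζ ↦ bergmanKernel z ζ • f ζ) 0 R =
      f (R ^ 2 * z) + (R ^ 2 * z) • deriv f (R ^ 2 * z) := by
  set a : ℂ := R ^ 2 * z with ha_def
  have ha : a ∈ ball 0 R := by
    rw [mem_ball_zero_iff, ha_def, norm_mul, norm_pow, Complex.norm_of_nonneg hR.le]
    nlinarith
  have hfa : DifferentiableAt ℂ f a :=
    hf.differentiableAt (hU.mem_nhds (hRU (ball_subset_closedBall ha)))
  calc circleAverage (fun ζ ↦ bergmanKernel z ζ • f ζ) 0 R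
    _ = (2 * π * Complex.I : ℂ)⁻¹ • ∮ ζ in C(0, R), ((ζ - a) ^ 2)⁻¹ • (ζ • f ζ) := by
      rw [circleAverage_eq_circleIntegral hR.ne']
      congr 1
      refine circleIntegral.integral_congr hR.le fun ζ hζ ↦ ?_
      have hζ0 : ζ ≠ 0 := ne_of_mem_sphere hζ hR.ne'
      simp only [bergmanKernel_eq_of_mem_sphere hR.ne' hζ, smul_smul]
      congr 1
      field
    _ = deriv (fun ζ ↦ ζ • f ζ) a :=
      Complex.two_pi_I_inv_smul_circleIntegral_sub_sq_inv_smul_of_differentiable hU hRU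
        (differentiableOn_id.fun_smul hf) ha
    _ = f a + a • deriv f a := by
      rw [deriv_fun_smul differentiableAt_fun_id hfa, deriv_id'', one_smul, add_comm]

lemma circleAverage_conj_bergmanKernel_smul (hf : DifferentiableOn ℂ f (closedBall 0 R))
    (hR : 0 ≤ R) (hz : ‖z‖ * R < 1) :
    circleAverage (fun ζ ↦ conj (bergmanKernel z ζ) • f ζ) 0 R = f 0 := by
  have hKf := ((differentiableOn_conj_bergmanKernel hz).fun_smul hf).diffContOnCl_ball subset_rfl
  rw [← abs_of_nonneg hR] at hKf
  simpa [bergmanKernel] using hKf.circleAverage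

lemma circleAverage_re_bergmanKernel_smul (hU : IsOpen U) (hRU : closedBall 0 R ⊆ U)
    (hf : DifferentiableOn ℂ f U) (hR : 0 < R) (hz : ‖z‖ * R < 1) :
    circleAverage (fun ζ ↦ (bergmanKernel z ζ).re • f ζ) 0 R =
      (2⁻¹ : ℂ) • (f (R ^ 2 * z) + (R ^ 2 * z) • deriv f (R ^ 2 * z) + f 0) := by
  have hf' : ContinuousOn f (closedBall 0 R) := hf.continuousOn.mono hRU
  have hK : CircleIntegrable (fun ζ ↦ bergmanKernel z ζ • f ζ) 0 R :=
    (((continuousOn_bergmanKernel hz).smul hf').mono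
      sphere_subset_closedBall).circleIntegrable hR.le
  have hK' : CircleIntegrable (fun ζ ↦ conj (bergmanKernel z ζ) • f ζ) 0 R :=
    (((differentiableOn_conj_bergmanKernel hz).continuousOn.smul hf').mono
      sphere_subset_closedBall).circleIntegrable hR.le
  have hre : ∀ ζ, (bergmanKernel z ζ).re • f ζ =
      (2⁻¹ : ℂ) • (bergmanKernel z ζ • f ζ + conj (bergmanKernel z ζ) • f ζ) := fun ζ ↦ by
    rw [← Complex.coe_smul, Complex.re_eq_add_conj, ← add_smul, smul_smul, div_eq_inv_mul]
  simp only [hre]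
  rw [circleAverage_fun_smul, circleAverage_fun_add hK hK',
    circleAverage_bergmanKernel_smul hU hRU hf hR hz,
    circleAverage_conj_bergmanKernel_smul (hf.mono hRU) hR.le hz]

end Holomorphic

section Harmonic

variable {u : ℂ → ℝ} {R : ℝ}

lemma exists_differentiableOn_re_eqOn_closedBall {c : ℂ} (hR : 0 ≤ R)
    (hu : HarmonicOnNhd u (closedBall c R)) :
    ∃ (S : ℝ) (f : ℂ → ℂ), R < S ∧ DifferentiableOn ℂ f (ball c S) ∧
      EqOn (fun z ↦ (f z).re) u (ball c S) := by
  obtain ⟨ε, hε, hball⟩ := (isCompact_closedBall c R).exists_thickening_subset_open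
    (InnerProductSpace.isOpen_setOfPred_harmonicAt u) hu
  rw [thickening_closedBall hε hR] at hball
  obtain ⟨f, hf, hfu⟩ := HarmonicOnNhd.exists_analyticOnNhd_ball_re_eq hball
  exact ⟨ε + R, f, lt_add_of_pos_left R hε, hf.differentiableOn, hfu⟩

lemma fderiv_re_comp_apply {f : ℂ → ℂ} {a : ℂ} (hf : DifferentiableAt ℂ f a) (v : ℂ) :
    fderiv ℝ (fun z ↦ (f z).re) a v = (v * deriv f a).re := by
  have h := Complex.reCLM.hasFDerivAt.comp a (hf.hasFDerivAt.restrictScalars ℝ)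
  simp [(show HasFDerivAt (fun z ↦ (f z).re) _ a from h).fderiv]

lemma circleAverage_mul_re_bergmanKernel {z : ℂ} (hu : HarmonicOnNhd u (closedBall 0 R))
    (hR : 0 < R) (hz : ‖z‖ * R < 1) :
    circleAverage (fun ζ ↦ u ζ * (bergmanKernel z ζ).re) 0 R =
      (u (R ^ 2 * z) + fderiv ℝ u (R ^ 2 * z) (R ^ 2 * z) + u 0) / 2 := by
  obtain ⟨S, f, hRS, hf, hfu⟩ := exists_differentiableOn_re_eqOn_closedBall hR.le hu
  have hRU : closedBall (0 : ℂ) R ⊆ ball 0 S := closedBall_subset_ball hRS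
  set a : ℂ := R ^ 2 * z with ha_def
  have ha : a ∈ ball 0 S := by
    rw [mem_ball_zero_iff, ha_def, norm_mul, norm_pow, Complex.norm_of_nonneg hR.le]
    nlinarith
  have hderiv : fderiv ℝ u a a = (a * deriv f a).re := by
    rw [← fderiv_re_comp_apply (hf.differentiableAt (isOpen_ball.mem_nhds ha)),
      (hfu.eventuallyEq_of_mem (isOpen_ball.mem_nhds ha)).fderiv_eq]
  have hint : CircleIntegrable (fun ζ ↦ (bergmanKernel z ζ).re • f ζ) 0 R :=
    (((Complex.continuous_re.comp_continuousOn (continuousOn_bergmanKernel hz)).smul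
      (hf.continuousOn.mono hRU)).mono sphere_subset_closedBall).circleIntegrable hR.le
  calc circleAverage (fun ζ ↦ u ζ * (bergmanKernel z ζ).re) 0 R
    _ = circleAverage (Complex.reCLM ∘ fun ζ ↦ (bergmanKernel z ζ).re • f ζ) 0 R := by
      refine circleAverage_congr_sphere fun ζ hζ ↦ ?_
      rw [abs_of_pos hR] at hζ
      simp [← hfu (hRU (sphere_subset_closedBall hζ)), mul_comm]
    _ = ((2⁻¹ : ℂ) • (f a + a • deriv f a + f 0)).re := by
      rw [Complex.reCLM.circleAverage_comp_comm hint,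
        circleAverage_re_bergmanKernel_smul isOpen_ball hRU hf hR hz, Complex.reCLM_apply]
    _ = (u a + fderiv ℝ u a a + u 0) / 2 := by
      simp [hderiv, ← hfu ha, ← hfu (mem_ball_self (hR.trans hRS)), div_eq_inv_mul]

end Harmonic

section Radial

variable {E F : Type*} [NormedAddCommGroup E] [NormedSpace ℝ E]
  [NormedAddCommGroup F] [NormedSpace ℝ F] [CompleteSpace F]
variable {u : E → F} {s : Set E} {z : E}

lemma integral_add_fderiv_smul (hs : IsOpen s) (hu : ContDiffOn ℝ 1 u s)
    (hz : ∀ t ∈ Icc (0 : ℝ) 1, t • z ∈ s) :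
    ∫ t in (0 : ℝ)..1, (u (t • z) + fderiv ℝ u (t • z) (t • z)) = u z := by
  have hderiv : ∀ t ∈ uIcc (0 : ℝ) 1, HasDerivAt (fun t : ℝ ↦ t • u (t • z))
      (u (t • z) + fderiv ℝ u (t • z) (t • z)) t := fun t ht ↦ by
    rw [uIcc_of_le zero_le_one] at ht
    have hut := ((hu.differentiableOn one_ne_zero).differentiableAt
      (hs.mem_nhds (hz t ht))).hasFDerivAt
    have hcomp := hut.comp_hasDerivAt t ((hasDerivAt_id t).smul_const z)
    simpa [add_comm] using (hasDerivAt_id t).fun_smul hcomp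
  have hcont : ContinuousOn (fun t : ℝ ↦ u (t • z) + fderiv ℝ u (t • z) (t • z)) (uIcc 0 1) := by
    rw [uIcc_of_le zero_le_one]
    have hline : ContinuousOn (fun t : ℝ ↦ t • z) (Icc 0 1) := by fun_prop
    exact (hu.continuousOn.comp hline hz).add
      (((hu.continuousOn_fderiv_of_isOpen hs le_rfl).comp hline hz).clm_apply hline)
  rw [intervalIntegral.integral_eq_sub_of_hasDerivAt hderiv hcont.intervalIntegrable]
  simp

end Radial

lemma integral_comp_sq_mul (g : ℝ → ℝ) {R : ℝ} (hR : 0 ≤ R) :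
    ∫ ρ in (0 : ℝ)..R, g (ρ ^ 2) * ρ = (∫ t in (0 : ℝ)..R ^ 2, g t) / 2 := by
  have h := intervalIntegral.integral_comp_mul_deriv_of_deriv_nonneg (a := 0) (b := R) (g := g)
    (f := fun ρ ↦ ρ ^ 2) (f' := fun ρ ↦ 2 * ρ) (by fun_prop)
    (fun ρ _ ↦ by simpa using hasDerivAt_pow 2 ρ)
    (fun ρ hρ ↦ by rw [min_eq_left hR] at hρ; linarith [hρ.1])
  simp only [Function.comp_apply, mul_left_comm _ (2 : ℝ), intervalIntegral.integral_const_mul] at h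
  rw [zero_pow two_ne_zero] at h
  rw [← h, mul_div_cancel_left₀ _ two_ne_zero]

theorem integral_circleAverage_mul_re_bergmanKernel {u : ℂ → ℝ} (hu : HarmonicOnNhd u (ball 0 1))
    {z : ℂ} (hz : ‖z‖ < 1) :
    ∫ ρ in (0 : ℝ)..1, circleAverage (fun ζ ↦ u ζ * (bergmanKernel z ζ).re) 0 ρ * ρ =
      (u z + u 0) / 4 := by
  have hsegment : ∀ t ∈ Icc (0 : ℝ) 1, t • z ∈ ball (0 : ℂ) 1 := fun t ht ↦ by
    rw [mem_ball_zero_iff, norm_smul, norm_of_nonneg ht.1]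
    exact (mul_le_of_le_one_left (norm_nonneg z) ht.2).trans_lt hz
  have hangular : EqOn (fun ρ ↦ circleAverage (fun ζ ↦ u ζ * (bergmanKernel z ζ).re) 0 ρ * ρ)
      (fun ρ ↦ (u (ρ ^ 2 • z) + u 0 + fderiv ℝ u (ρ ^ 2 • z) (ρ ^ 2 • z)) / 2 * ρ) (Ioo 0 1) := by
    intro ρ hρ
    have hsub : closedBall (0 : ℂ) ρ ⊆ ball 0 1 := closedBall_subset_ball hρ.2
    have hzρ : ‖z‖ * ρ < 1 := mul_lt_one_of_nonneg_of_lt_one_left (norm_nonneg z) hz hρ.2.le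
    simp [circleAverage_mul_re_bergmanKernel (hu.mono hsub) hρ.1 hzρ, add_right_comm]
  have hradial : ∫ t in (0 : ℝ)..1, (u (t • z) + u 0 + fderiv ℝ u (t • z) (t • z)) = u z + u 0 := by
    simpa using integral_add_fderiv_smul (u := fun w ↦ u w + u 0) isOpen_ball
      ((hu.contDiffOn.of_le one_le_two).add contDiffOn_const) hsegment
  rw [intervalIntegral.integral_congr_Ioo_of_le zero_le_one hangular,
    integral_comp_sq_mul (fun t ↦ (u (t • z) + u 0 + fderiv ℝ u (t • z) (t • z)) / 2) zero_le_one,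
    intervalIntegral.integral_div, one_pow, hradial]
  ring

theorem harmonic_bergman_representation_general {u : ℂ → ℝ} (hu : HarmonicOnNhd u (ball 0 1))
    {r : ℝ} (hr : |r| < 1) (θ : ℝ) :
    u (r * Complex.exp (θ * Complex.I)) =
      -u 0 + (2 / π) *
        ∫ ρ in (0 : ℝ)..1, (∫ φ in (0 : ℝ)..(2 * π),
          u (ρ * Complex.exp (φ * Complex.I)) *
            ((1 - 2 * r * ρ * cos (θ - φ) + r ^ 2 * ρ ^ 2 * cos (2 * (θ - φ))) /
              (1 - 2 * r * ρ * cos (θ - φ) + r ^ 2 * ρ ^ 2) ^ 2)) * ρ := by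
  have h := integral_circleAverage_mul_re_bergmanKernel hu (z := circleMap 0 r θ)
    (by rwa [norm_circleMap_zero])
  simp only [circleAverage_def, re_bergmanKernel_circleMap] at h
  simp only [circleMap_zero, smul_eq_mul, mul_assoc (2 * π)⁻¹,
    intervalIntegral.integral_const_mul, inv_mul_eq_iff_eq_mul₀ two_pi_pos.ne'] at h
  rw [h]
  field

/-- **Reproducing formula for the harmonic Bergman space `hA²`**: if `u` is
harmonic on the unit disk with `∫_D |u|² < ∞`, then for any point `r e^{iθ}` of
the disk, `u` is reproduced (up to subtracting `u(0)`) by the kernel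
`Q(t,ψ) = (1 - 2t cos ψ + t² cos 2ψ)/(1 - 2t cos ψ + t²)²`. -/
theorem harmonic_bergman_representation (u : ℂ → ℝ)
    (hu : ContDiffOn ℝ 2 u (Metric.ball (0 : ℂ) 1))
    (hharm : ∀ z ∈ Metric.ball (0 : ℂ) 1, laplacian u z = 0)
    (hint : IntegrableOn (fun z : ℂ => |u z| ^ 2) (Metric.ball (0 : ℂ) 1) volume)
    (r θ : ℝ) (hr0 : 0 ≤ r) (hr1 : r < 1) :
    u ((r : ℂ) * Complex.exp ((θ : ℂ) * Complex.I)) =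
      -u 0 + (2 / π) *
        ∫ ρ in (0:ℝ)..1, (∫ φ in (0:ℝ)..(2 * π),
          u ((ρ : ℂ) * Complex.exp ((φ : ℂ) * Complex.I)) *
            ((1 - 2 * r * ρ * cos (θ - φ) + r ^ 2 * ρ ^ 2 * cos (2 * (θ - φ))) /
              (1 - 2 * r * ρ * cos (θ - φ) + r ^ 2 * ρ ^ 2) ^ 2)) * ρ :=
  harmonic_bergman_representation_general (harmonicOnNhd_of_laplacian_eq_zero isOpen_ball hu hharm)
    (abs_lt.2 ⟨by linarith, hr1⟩) θ
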